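/- (Lemma 4.5, circle-rotation form) Suppose ρ ∈ (0,1) is irrational and its continued fraction partial quotients satisfy aₙ ≤ n² for all sufficiently large n. Then for any δ > 0 there exists ε₀ > 0 such that for every 0 < ε ≤ ε₀ and every real x there exists an integer n with 1 ≤ n ≤ ε^{−1/3−δ} and ‖x + n·ρ‖ ≤ √(n·ε). Equivalently, the first time N(x) = min{ n ≥ 0 : √(nε) ≥ ‖x + nρ‖ } satisfies N(x) ≤ ε^{−1/3−δ} for all x. -/

import Mathlib

/-!
For a reduced fraction `p / q`, the points `n p / q` with `n` in a window of `q` consecutive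
integers run through all multiples of `1 / q` modulo one. If `|ρ - p / q| ≤ 1 / q²`, then replacing
`p / q` by `ρ` moves the points with `q ≤ n < 2 q` by at most `2 / q`, so every `x` has some
`n ∈ [q, 2 q)` with `‖x + n ρ‖ ≤ 3 / q`. As `n ≥ q`, this is at most `√(n ε)` once `q³ ε ≥ 9`.

It remains to find, among the convergents of `ρ`, a denominator just above `(9 / ε)^(1/3)`.
Denominators grow at least like powers of the golden ratio, so subexponential partial quotients
satisfy `aₙ = O(qₙ^η)` for every `η > 0`, that is `qₙ₊₁ = O(qₙ^(1 + η))`: no gap in the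
sequence of denominators is larger than that.
-/

open MeasureTheory Filter

/-- The Gauss map `x ↦ {1/x}`. -/
noncomputable def gaussMap (x : ℝ) : ℝ := Int.fract (1 / x)

/-- The `n`-th continued fraction partial quotient of `ρ` (for `n ≥ 1`):
`aₙ(ρ) = ⌊1 / G^[n-1] ρ⌋` where `G` is the Gauss map. -/
noncomputable def cfa (ρ : ℝ) (n : ℕ) : ℤ := ⌊1 / (gaussMap^[n - 1] ρ)⌋

/-- The Diophantine condition (2): `aₙ ≤ n²` for all sufficiently large `n`. -/
def DiophCond (ρ : ℝ) : Prop := ∃ N : ℕ, ∀ n : ℕ, N ≤ n → cfa ρ n ≤ (n : ℤ) ^ 2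

/-- Denominators `qₙ` of the continued fraction convergents of `ρ`:
`q₀ = 1`, `q₁ = a₁`, `q_{n+2} = a_{n+2} q_{n+1} + qₙ`. -/
noncomputable def cfq (ρ : ℝ) : ℕ → ℤ
  | 0 => 1
  | 1 => cfa ρ 1
  | n + 2 => cfa ρ (n + 2) * cfq ρ (n + 1) + cfq ρ n

/-- Numerators `pₙ` of the continued fraction convergents of `ρ`:
`p₀ = 0`, `p₁ = 1`, `p_{n+2} = a_{n+2} p_{n+1} + pₙ`. -/
noncomputable def cfp (ρ : ℝ) : ℕ → ℤ
  | 0 => 0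
  | 1 => 1
  | n + 2 => cfa ρ (n + 2) * cfp ρ (n + 1) + cfp ρ n

/-- Distance from a real number to the nearest integer. -/
noncomputable def distNearestInt (t : ℝ) : ℝ := |t - round t|

open Asymptotics Topology Real
open scoped goldenRatio

section RationalApproximation

lemma distNearestInt_add_le (s t : ℝ) : distNearestInt (s + t) ≤ distNearestInt s + |t| :=
  calc |s + t - round (s + t)| ≤ |s + t - round s| := round_le _ _
    _ = |(s - round s) + t| := by ring_nf
    _ ≤ |s - round s| + |t| := abs_add_le _ _

lemma exists_mem_Ico_mul_modEq {p q : ℤ} (hq : 0 < q) (hpq : IsCoprime p q) (a b : ℤ) :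
    ∃ n ∈ Set.Ico a (a + q), n * p ≡ b [ZMOD q] := by
  obtain ⟨u, v, huv⟩ := hpq
  obtain ⟨r, hr₀, hrq, hr⟩ := Int.existsUnique_equiv (b * u - a) hq
  refine ⟨a + r, ⟨by omega, by omega⟩, ?_⟩
  calc (a + r) * p ≡ (a + (b * u - a)) * p [ZMOD q] := (hr.add_left a).mul_right p
    _ = b + q * -(b * v) := by linear_combination b * huv
    _ ≡ b [ZMOD q] := Int.add_modulus_mul_modEq_iff.2 rfl

lemma exists_mem_Ico_distNearestInt_add_mul_div_le {p q : ℤ} (hq : 0 < q) (hpq : IsCoprime p q)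
    (a : ℤ) (x : ℝ) :
    ∃ n ∈ Set.Ico a (a + q), distNearestInt (x + n * (p / q)) ≤ 1 / (2 * q) := by
  have hqR : (0 : ℝ) < q := mod_cast hq
  obtain ⟨n, hn, hmod⟩ := exists_mem_Ico_mul_modEq hq hpq a (round (-(x * q)))
  obtain ⟨k, hk⟩ := hmod.symm.dvd
  have hkR : (n * p - round (-(x * q)) : ℝ) = q * k := mod_cast hk
  refine ⟨n, hn, ?_⟩
  calc distNearestInt (x + n * (p / q)) ≤ |x + n * (p / q) - k| := round_le _ _
    _ = |-(x * q) - round (-(x * q))| / q := by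
      rw [← abs_of_pos hqR, ← abs_div, abs_of_pos hqR, ← abs_neg]
      congr 1
      field_simp
      linear_combination -hkR
    _ ≤ 1 / 2 / q := by gcongr; exact abs_sub_round _
    _ = 1 / (2 * q) := by rw [div_div]

lemma exists_mem_Ico_distNearestInt_add_mul_le {ρ : ℝ} {p q : ℤ} (hq : 0 < q)
    (hpq : IsCoprime p q) (happrox : |ρ - p / q| ≤ 1 / (q : ℝ) ^ 2) (x : ℝ) :
    ∃ n ∈ Set.Ico q (2 * q), distNearestInt (x + n * ρ) ≤ 3 / q := by
  have : (0 : ℝ) < q := mod_cast hq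
  obtain ⟨n, ⟨hqn, hnq⟩, hdist⟩ := exists_mem_Ico_distNearestInt_add_mul_div_le hq hpq q x
  have hn₀ : (0 : ℝ) ≤ n := mod_cast hq.le.trans hqn
  have hn₂ : (n : ℝ) ≤ 2 * q := by exact_mod_cast (by omega : n ≤ 2 * q)
  refine ⟨n, ⟨hqn, by omega⟩, ?_⟩
  calc distNearestInt (x + n * ρ)
      = distNearestInt (x + n * (p / q) + n * (ρ - p / q)) := by ring_nf
    _ ≤ distNearestInt (x + n * (p / q)) + |n * (ρ - p / q)| := distNearestInt_add_le _ _
    _ = distNearestInt (x + n * (p / q)) + n * |ρ - p / q| := by rw [abs_mul, abs_of_nonneg hn₀]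
    _ ≤ 1 / (2 * q) + 2 * q * (1 / (q : ℝ) ^ 2) := by gcongr
    _ = 5 / 2 / q := by field_simp; norm_num
    _ ≤ 3 / q := by gcongr; norm_num

end RationalApproximation

section Scales

lemma exists_lt_le_succ_of_tendsto_atTop {α : Type*} [LinearOrder α] [NoMaxOrder α] {u : ℕ → α}
    (hu : Tendsto u atTop atTop) {t : α} (ht : u 0 < t) : ∃ n, u n < t ∧ t ≤ u (n + 1) := by
  classical
  have hex : ∃ n, t ≤ u n := (hu.eventually_ge_atTop t).exists
  have hspec := Nat.find_spec hex
  obtain ⟨n, hn⟩ := Nat.exists_eq_add_one_of_ne_zero fun h₀ : Nat.find hex = 0 =>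
    ht.not_ge (h₀ ▸ hspec)
  exact ⟨n, not_le.1 (Nat.find_min hex (by omega)), hn ▸ hspec⟩

lemma exists_mem_Icc_mul_rpow_of_isBigO {u : ℕ → ℝ} {s : ℝ} (hs : 0 ≤ s) (hpos : ∀ n, 0 < u n)
    (htop : Tendsto u atTop atTop) (hgrowth : (fun n => u (n + 1)) =O[atTop] fun n => u n ^ s) :
    ∃ C, ∀ t > u 0, ∃ n, u n ∈ Set.Icc t (C * t ^ s) := by
  obtain ⟨C, hC, hbound⟩ := bound_of_isBigO_nat_atTop hgrowth
  refine ⟨C, fun t ht => ?_⟩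
  obtain ⟨n, hlt, hle⟩ := exists_lt_le_succ_of_tendsto_atTop htop ht
  refine ⟨n + 1, hle, ?_⟩
  have hrpow := rpow_pos_of_pos (hpos n) s
  calc u (n + 1) ≤ ‖u (n + 1)‖ := le_norm_self _
    _ ≤ C * ‖u n ^ s‖ := hbound hrpow.ne'
    _ = C * u n ^ s := by rw [norm_of_nonneg hrpow.le]
    _ ≤ C * t ^ s := by gcongr; exact (hpos n).le

lemma eventually_const_mul_rpow_le_rpow {a b : ℝ} (hba : b < a) (C : ℝ) :
    ∀ᶠ ε : ℝ in 𝓝[>] 0, C * ε ^ a ≤ ε ^ b := by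
  filter_upwards [(tendsto_rpow_neg_nhdsGT_zero (sub_neg.2 hba)).eventually_ge_atTop C,
    self_mem_nhdsWithin] with ε hC hε
  have hε₀ : 0 < ε := hε
  calc C * ε ^ a ≤ ε ^ (b - a) * ε ^ a := by gcongr
    _ = ε ^ b := by rw [← rpow_add hε₀, sub_add_cancel]

end Scales

section Return

lemma three_div_le_sqrt_mul {ε n q : ℝ} (hε : 0 ≤ ε) (hq : 0 < q) (hqn : q ≤ n)
    (hqε : 9 ≤ q ^ 3 * ε) : 3 / q ≤ √(n * ε) := by
  refine le_sqrt_of_sq_le ?_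
  rw [div_pow, div_le_iff₀ (by positivity)]
  calc (3 : ℝ) ^ 2 ≤ q * ε * q ^ 2 := by linarith
    _ ≤ n * ε * q ^ 2 := by gcongr

theorem exists_eventually_return_time_le {ρ s : ℝ} {q : ℕ → ℤ} (hs : 0 ≤ s) (hpos : ∀ n, 0 < q n)
    (htop : Tendsto (fun n => (q n : ℝ)) atTop atTop)
    (hgrowth : (fun n => (q (n + 1) : ℝ)) =O[atTop] fun n => (q n : ℝ) ^ s)
    (happrox : ∀ n, ∃ p : ℤ, IsCoprime p (q n) ∧ |ρ - p / q n| ≤ 1 / (q n : ℝ) ^ 2) :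
    ∃ C : ℝ, ∀ᶠ ε : ℝ in 𝓝[>] 0, ∀ x : ℝ, ∃ n : ℕ, 1 ≤ n ∧ (n : ℝ) ≤ C * ε ^ (-(s / 3)) ∧
      distNearestInt (x + n * ρ) ≤ √(n * ε) := by
  obtain ⟨C, hscale⟩ :=
    exists_mem_Icc_mul_rpow_of_isBigO hs (fun n => Int.cast_pos.2 (hpos n)) htop hgrowth
  have hscale_top : Tendsto (fun ε : ℝ => (9 / ε) ^ (1 / 3 : ℝ)) (𝓝[>] 0) atTop :=
    (tendsto_rpow_atTop (by norm_num)).comp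
      (tendsto_inv_nhdsGT_zero.const_mul_atTop (by norm_num : (0 : ℝ) < 9))
  refine ⟨2 * C * 9 ^ (s / 3), ?_⟩
  filter_upwards [hscale_top.eventually_gt_atTop (q 0 : ℝ), self_mem_nhdsWithin] with ε hlarge hε x
  have hε₀ : 0 < ε := hε
  obtain ⟨m, hqm, hqm'⟩ := hscale _ hlarge
  have hqm_pos : (0 : ℝ) < q m := Int.cast_pos.2 (hpos m)
  obtain ⟨p, hcoprime, hp⟩ := happrox m
  obtain ⟨n, ⟨hqn, hnq⟩, hdist⟩ :=
    exists_mem_Ico_distNearestInt_add_mul_le (hpos m) hcoprime hp x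
  have hn_pos := (hpos m).trans_le hqn
  lift n to ℕ using hn_pos.le
  have hn_le : (n : ℝ) ≤ 2 * q m := mod_cast hnq.le
  refine ⟨n, by omega, ?_, hdist.trans ?_⟩
  · calc (n : ℝ) ≤ 2 * (C * ((9 / ε) ^ (1 / 3 : ℝ)) ^ s) := by linarith
      _ = 2 * C * 9 ^ (s / 3) * ε ^ (-(s / 3)) := by
        rw [← rpow_mul (by positivity), div_rpow (by norm_num) hε₀.le, rpow_neg hε₀.le,
          one_div_mul_eq_div]
        ring
  · refine three_div_le_sqrt_mul hε₀.le hqm_pos (mod_cast hqn) ?_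
    rw [← div_le_iff₀ hε₀]
    calc 9 / ε = ((9 / ε) ^ (1 / 3 : ℝ)) ^ 3 := by
          rw [← rpow_mul_natCast (by positivity)]; norm_num
      _ ≤ (q m : ℝ) ^ 3 := by gcongr

end Return

section ContinuedFraction

open GenContFract

variable {ρ : ℝ}

lemma gaussMap_iterate_irrational (hirr : Irrational ρ) (n : ℕ) :
    Irrational (gaussMap^[n] ρ) := by
  induction n with
  | zero => exact hirr
  | succ n ih =>
    rw [Function.iterate_succ_apply', gaussMap, one_div]
    exact ih.inv.sub_intCast _

lemma exists_stream_eq_some_fr_eq_gaussMap_iterate (hρ : ρ ∈ Set.Ioo (0 : ℝ) 1)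
    (hirr : Irrational ρ) (n : ℕ) :
    ∃ b : ℤ, IntFractPair.stream ρ n = some ⟨b, gaussMap^[n] ρ⟩ := by
  induction n with
  | zero => exact ⟨⌊ρ⌋, by
      rw [IntFractPair.stream_zero, IntFractPair.of, Int.fract_eq_self.2 ⟨hρ.1.le, hρ.2⟩]; rfl⟩
  | succ n ih =>
    obtain ⟨b, hb⟩ := ih
    refine ⟨⌊(gaussMap^[n] ρ)⁻¹⌋, ?_⟩
    rw [IntFractPair.stream_succ_of_some hb (gaussMap_iterate_irrational hirr n).ne_zero,
      Function.iterate_succ_apply', gaussMap, one_div]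
    rfl

variable (hρ : ρ ∈ Set.Ioo (0 : ℝ) 1) (hirr : Irrational ρ)
include hρ hirr

lemma of_s_get?_eq_cfa (n : ℕ) : (GenContFract.of ρ).s.get? n = some ⟨1, cfa ρ (n + 1)⟩ := by
  obtain ⟨b, hb⟩ := exists_stream_eq_some_fr_eq_gaussMap_iterate hρ hirr n
  rw [get?_of_eq_some_of_get?_intFractPair_stream_fr_ne_zero hb
    (gaussMap_iterate_irrational hirr n).ne_zero, cfa, one_div]
  rfl

lemma of_not_terminatedAt (n : ℕ) : ¬(GenContFract.of ρ).TerminatedAt n := by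
  rw [terminatedAt_iff_s_none, of_s_get?_eq_cfa hρ hirr]
  exact Option.some_ne_none _

lemma of_dens_eq_cfq (n : ℕ) : (GenContFract.of ρ).dens n = cfq ρ n := by
  induction n using Nat.twoStepInduction with
  | zero => simp [cfq]
  | one => simp [cfq, first_den_eq (of_s_get?_eq_cfa hρ hirr 0)]
  | more n ih₀ ih₁ => simp [cfq, dens_recurrence (of_s_get?_eq_cfa hρ hirr (n + 1)) ih₀ ih₁]

lemma of_nums_eq_cfp (n : ℕ) : (GenContFract.of ρ).nums n = cfp ρ n := by
  have hfloor : ⌊ρ⌋ = 0 := Int.floor_eq_zero_iff.2 ⟨hρ.1.le, hρ.2⟩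
  induction n using Nat.twoStepInduction with
  | zero => simp [cfp, hfloor]
  | one => simp [cfp, hfloor, first_num_eq (of_s_get?_eq_cfa hρ hirr 0)]
  | more n ih₀ ih₁ => simp [cfp, nums_recurrence (of_s_get?_eq_cfa hρ hirr (n + 1)) ih₀ ih₁]

lemma one_le_cfa (n : ℕ) : 1 ≤ cfa ρ (n + 1) := by
  have h : (1 : ℝ) ≤ cfa ρ (n + 1) :=
    of_one_le_get?_partDen (partDen_eq_s_b (of_s_get?_eq_cfa hρ hirr n))
  exact_mod_cast h

lemma fib_succ_le_cfq (n : ℕ) : (Nat.fib (n + 1) : ℝ) ≤ cfq ρ n :=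
  of_dens_eq_cfq hρ hirr n ▸ succ_nth_fib_le_of_nth_den (.inr (of_not_terminatedAt hρ hirr _))

lemma cfq_pos (n : ℕ) : 0 < cfq ρ n := by
  have hfib : (0 : ℝ) < Nat.fib (n + 1) := mod_cast Nat.fib_pos.2 n.succ_pos
  exact_mod_cast hfib.trans_le (fib_succ_le_cfq hρ hirr n)

lemma cfq_le_cfq_succ (n : ℕ) : cfq ρ n ≤ cfq ρ (n + 1) := by
  have hmono : (GenContFract.of ρ).dens n ≤ (GenContFract.of ρ).dens (n + 1) := of_den_mono
  rw [of_dens_eq_cfq hρ hirr, of_dens_eq_cfq hρ hirr] at hmono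
  exact_mod_cast hmono

lemma cfp_mul_cfq_succ_sub_cfq_mul_cfp_succ (n : ℕ) :
    cfp ρ n * cfq ρ (n + 1) - cfq ρ n * cfp ρ (n + 1) = (-1) ^ (n + 1) := by
  have hdet : (GenContFract.of ρ).nums n * (GenContFract.of ρ).dens (n + 1) -
      (GenContFract.of ρ).dens n * (GenContFract.of ρ).nums (n + 1) = (-1) ^ (n + 1) :=
    SimpContFract.determinant (s := SimpContFract.of ρ) (of_not_terminatedAt hρ hirr n)
  simp only [of_dens_eq_cfq hρ hirr, of_nums_eq_cfp hρ hirr] at hdet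
  exact_mod_cast hdet

lemma isCoprime_cfp_cfq (n : ℕ) : IsCoprime (cfp ρ n) (cfq ρ n) := by
  have hsign : ((-1) ^ (n + 1) * (-1) ^ (n + 1) : ℤ) = 1 := by
    rw [← mul_pow, neg_one_mul, neg_neg, one_pow]
  refine ⟨(-1) ^ (n + 1) * cfq ρ (n + 1), -(-1) ^ (n + 1) * cfp ρ (n + 1), ?_⟩
  linear_combination
    (-1) ^ (n + 1) * cfp_mul_cfq_succ_sub_cfq_mul_cfp_succ hρ hirr n + hsign

lemma abs_sub_cfp_div_cfq_le (n : ℕ) : |ρ - cfp ρ n / cfq ρ n| ≤ 1 / (cfq ρ n : ℝ) ^ 2 := by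
  have hpos : (0 : ℝ) < cfq ρ n := mod_cast cfq_pos hρ hirr n
  have happrox := abs_sub_convs_le (of_not_terminatedAt hρ hirr n)
  rw [conv_eq_num_div_den, of_nums_eq_cfp hρ hirr, of_dens_eq_cfq hρ hirr,
    of_dens_eq_cfq hρ hirr] at happrox
  refine happrox.trans ?_
  rw [sq]
  gcongr
  exact cfq_le_cfq_succ hρ hirr n

lemma goldenRatio_pow_le_cfq (n : ℕ) : φ ^ n ≤ φ * cfq ρ n := by
  have hmono : (Nat.fib n : ℝ) ≤ Nat.fib (n + 1) := mod_cast Nat.fib_le_fib_succ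
  refine le_of_mul_le_mul_left ?_ goldenRatio_pos
  calc φ * φ ^ n = φ * Nat.fib (n + 1) + Nat.fib n := by
        rw [goldenRatio_mul_fib_succ_add_fib, pow_succ']
    _ ≤ φ ^ 2 * Nat.fib (n + 1) := by rw [goldenRatio_sq]; linarith
    _ ≤ φ ^ 2 * cfq ρ n := by gcongr; exact fib_succ_le_cfq hρ hirr n
    _ = φ * (φ * cfq ρ n) := by ring

lemma tendsto_cfq_atTop : Tendsto (fun n => (cfq ρ n : ℝ)) atTop atTop :=
  (tendsto_const_mul_atTop_of_pos goldenRatio_pos).1 <|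
    tendsto_atTop_mono (goldenRatio_pow_le_cfq hρ hirr)
      (tendsto_pow_atTop_atTop_of_one_lt one_lt_goldenRatio)

lemma cfq_succ_le (n : ℕ) : cfq ρ (n + 1) ≤ 2 * cfa ρ (n + 1) * cfq ρ n := by
  have ha := one_le_cfa hρ hirr n
  cases n with
  | zero =>
    simp only [cfq, zero_add] at ha ⊢
    linarith
  | succ n =>
    have hmono := cfq_le_cfq_succ hρ hirr n
    have hle : cfq ρ (n + 1) ≤ cfa ρ (n + 2) * cfq ρ (n + 1) :=
      le_mul_of_one_le_left (cfq_pos hρ hirr (n + 1)).le ha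
    rw [cfq]
    linarith

lemma goldenRatio_rpow_pow_le_cfq_rpow {η : ℝ} (hη : 0 ≤ η) (n : ℕ) :
    (φ ^ η) ^ n ≤ φ ^ η * (cfq ρ n : ℝ) ^ η :=
  calc (φ ^ η) ^ n = (φ ^ n) ^ η := by
        rw [← rpow_mul_natCast goldenRatio_pos.le, mul_comm η,
          rpow_natCast_mul goldenRatio_pos.le]
    _ ≤ (φ * cfq ρ n) ^ η := by gcongr; exact goldenRatio_pow_le_cfq hρ hirr n
    _ = φ ^ η * (cfq ρ n : ℝ) ^ η :=
      mul_rpow goldenRatio_pos.le (mod_cast (cfq_pos hρ hirr n).le)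

lemma cfq_succ_isBigO_rpow (hcfa : ∀ r : ℝ, 1 < r → (fun n => (cfa ρ n : ℝ)) =O[atTop] (r ^ ·))
    {η : ℝ} (hη : 0 < η) :
    (fun n => (cfq ρ (n + 1) : ℝ)) =O[atTop] fun n => (cfq ρ n : ℝ) ^ (1 + η) := by
  set r : ℝ := φ ^ η
  have hr : 1 < r := one_lt_rpow one_lt_goldenRatio hη
  have hq : ∀ n, (0 : ℝ) < cfq ρ n := fun n => mod_cast cfq_pos hρ hirr n
  obtain ⟨C, hC, hbound⟩ := bound_of_isBigO_nat_atTop (hcfa r hr)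
  have ha : ∀ n, (cfa ρ (n + 1) : ℝ) ≤ C * r ^ 2 * (cfq ρ n : ℝ) ^ η := fun n =>
    calc (cfa ρ (n + 1) : ℝ) ≤ ‖(cfa ρ (n + 1) : ℝ)‖ := le_norm_self _
      _ ≤ C * ‖r ^ (n + 1)‖ := hbound (by positivity)
      _ = C * (r * r ^ n) := by rw [norm_of_nonneg (by positivity), pow_succ']
      _ ≤ C * (r * (r * (cfq ρ n : ℝ) ^ η)) := by
        gcongr; exact goldenRatio_rpow_pow_le_cfq_rpow hρ hirr hη.le n
      _ = C * r ^ 2 * (cfq ρ n : ℝ) ^ η := by ring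
  refine .of_bound (2 * C * r ^ 2) (.of_forall fun n => ?_)
  rw [norm_of_nonneg (hq _).le, norm_of_nonneg (rpow_nonneg (hq n).le _)]
  calc (cfq ρ (n + 1) : ℝ) ≤ 2 * cfa ρ (n + 1) * cfq ρ n := mod_cast cfq_succ_le hρ hirr n
    _ ≤ 2 * (C * r ^ 2 * (cfq ρ n : ℝ) ^ η) * cfq ρ n := by
      gcongr
      · exact (hq n).le
      · exact ha n
    _ = 2 * C * r ^ 2 * (cfq ρ n : ℝ) ^ (1 + η) := by
      rw [rpow_add (hq n), rpow_one]
      ring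

end ContinuedFraction

lemma DiophCond.isBigO_pow {ρ : ℝ} (hρ : DiophCond ρ) {r : ℝ} (hr : 1 < r) :
    (fun n => (cfa ρ n : ℝ)) =O[atTop] (r ^ ·) := by
  obtain ⟨N, hN⟩ := hρ
  refine IsBigO.trans (.of_bound 1 ?_)
    (isLittleO_pow_const_const_pow_of_one_lt (R := ℝ) 2 hr).isBigO
  filter_upwards [eventually_ge_atTop N, eventually_ge_atTop 2] with n hn hn₂
  have hnonneg : 0 ≤ cfa ρ n := by
    obtain ⟨m, rfl⟩ := Nat.exists_eq_add_of_le hn₂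
    rw [cfa, show 2 + m - 1 = m + 1 by omega, Function.iterate_succ_apply', gaussMap]
    exact Int.floor_nonneg.2 (one_div_nonneg.2 (Int.fract_nonneg _))
  rw [one_mul, norm_of_nonneg (mod_cast hnonneg), norm_of_nonneg (by positivity)]
  exact_mod_cast hN n hn

theorem stmt_6_general (ρ : ℝ) (hρ : ρ ∈ Set.Ioo (0 : ℝ) 1) (hirr : Irrational ρ)
    (hcfa : ∀ r : ℝ, 1 < r → (fun n => (cfa ρ n : ℝ)) =O[atTop] (r ^ ·)) :
    ∀ δ : ℝ, 0 < δ → ∃ ε₀ : ℝ, 0 < ε₀ ∧ ∀ ε : ℝ, 0 < ε → ε ≤ ε₀ → ∀ x : ℝ,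
      ∃ n : ℕ, 1 ≤ n ∧ (n : ℝ) ≤ ε ^ (-(1 / 3 : ℝ) - δ) ∧
        distNearestInt (x + (n : ℝ) * ρ) ≤ Real.sqrt ((n : ℝ) * ε) := by
  intro δ hδ
  obtain ⟨C, hreturn⟩ := exists_eventually_return_time_le (by positivity : 0 ≤ 1 + δ)
    (cfq_pos hρ hirr) (tendsto_cfq_atTop hρ hirr) (cfq_succ_isBigO_rpow hρ hirr hcfa hδ)
    fun n => ⟨cfp ρ n, isCoprime_cfp_cfq hρ hirr n, abs_sub_cfp_div_cfq_le hρ hirr n⟩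
  have habsorb : ∀ᶠ ε : ℝ in 𝓝[>] 0, C * ε ^ (-((1 + δ) / 3)) ≤ ε ^ (-(1 / 3 : ℝ) - δ) :=
    eventually_const_mul_rpow_le_rpow (by linarith) C
  obtain ⟨ε₀, hε₀, hsub⟩ := mem_nhdsGT_iff_exists_Ioc_subset.1 (hreturn.and habsorb)
  refine ⟨ε₀, hε₀, fun ε hε hεle x => ?_⟩
  obtain ⟨hreturn_ε, habsorb_ε⟩ := hsub ⟨hε, hεle⟩
  obtain ⟨n, hn, hnC, hdist⟩ := hreturn_ε x
  exact ⟨n, hn, hnC.trans habsorb_ε, hdist⟩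

/-- Lemma 4.5, circle-rotation form: under the Diophantine condition (2),
for any `δ > 0` there exists `ε₀ > 0` such that for every `0 < ε ≤ ε₀` and every real
`x` there is an integer `n` with `1 ≤ n ≤ ε^{−1/3−δ}` and `‖x + nρ‖ ≤ √(nε)`. -/
theorem stmt_6 (ρ : ℝ) (hρ : ρ ∈ Set.Ioo (0 : ℝ) 1) (hirr : Irrational ρ)
    (hdioph : DiophCond ρ) :
    ∀ δ : ℝ, 0 < δ → ∃ ε₀ : ℝ, 0 < ε₀ ∧ ∀ ε : ℝ, 0 < ε → ε ≤ ε₀ → ∀ x : ℝ,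
      ∃ n : ℕ, 1 ≤ n ∧ (n : ℝ) ≤ ε ^ (-(1 / 3 : ℝ) - δ) ∧
        distNearestInt (x + (n : ℝ) * ρ) ≤ Real.sqrt ((n : ℝ) * ε) :=
  stmt_6_general ρ hρ hirr fun _ hr => hdioph.isBigO_pow hr
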